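/- arXiv:2203.12248 — 2 statements merged into one kernel-verified Lean document; each statement's English description precedes it below -/
import Mathlib

section
/- For every positive integer k there exists an integer c such that every finite simple graph G that is not conflict-free c-choosable contains a subgraph that is a 1-subdivision of a graph with average degree at least k, and contains a subgraph that is a 3-subdivision of a graph with chromatic number at least k. -/
open SimpleGraph

universe u v

namespace CFPaper

variable {V : Type u} {W : Type v}

/-- A coloring is proper if adjacent vertices get distinct colors. -/
def Proper (G : SimpleGraph V) (φ : V → ℕ) : Prop :=
  ∀ ⦃u w : V⦄, G.Adj u w → φ u ≠ φ w

/-- A coloring is conflict-free if every non-isolated vertex has a color appearing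
exactly once in its open neighborhood. -/
def ConflictFree (G : SimpleGraph V) (φ : V → ℕ) : Prop :=
  ∀ v : V, (G.neighborSet v).Nonempty →
    ∃ c : ℕ, {u : V | G.Adj v u ∧ φ u = c}.ncard = 1

/-- `G` is conflict-free `k`-choosable (k a real number). -/
def CFChoosable (G : SimpleGraph V) (k : ℝ) : Prop :=
  ∀ L : V → Finset ℕ, (∀ v, k ≤ ((L v).card : ℝ)) →
    ∃ φ : V → ℕ, (∀ v, φ v ∈ L v) ∧ Proper G φ ∧ ConflictFree G φ

/-- A coloring is `S`-achieved if for every non-isolated vertex there are `s ∈ S`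
and a color appearing exactly `s` times in its open neighborhood. -/
def SAchieved (S : Set ℕ) (G : SimpleGraph V) (φ : V → ℕ) : Prop :=
  ∀ v : V, (G.neighborSet v).Nonempty →
    ∃ s ∈ S, ∃ c : ℕ, {u : V | G.Adj v u ∧ φ u = c}.ncard = s

/-- `G` is `S`-achieved `t`-choosable. -/
def SChoosable (S : Set ℕ) (G : SimpleGraph V) (t : ℕ) : Prop :=
  ∀ L : V → Finset ℕ, (∀ v, t ≤ (L v).card) →
    ∃ φ : V → ℕ, (∀ v, φ v ∈ L v) ∧ Proper G φ ∧ SAchieved S G φ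

/-- `G` is properly `S`-achieved `t`-colorable (colors from `{1,…,t}`). -/
def SColorable (S : Set ℕ) (G : SimpleGraph V) (t : ℕ) : Prop :=
  ∃ φ : V → ℕ, (∀ v, φ v ∈ Finset.Icc 1 t) ∧ Proper G φ ∧ SAchieved S G φ

/-- `G` has a proper conflict-free coloring with colors from `{1,…,t}`. -/
def PCFColorable (G : SimpleGraph V) (t : ℕ) : Prop :=
  ∃ φ : V → ℕ, (∀ v, φ v ∈ Finset.Icc 1 t) ∧ Proper G φ ∧ ConflictFree G φ

/-- The proper conflict-free chromatic number. -/
noncomputable def chiPCF (G : SimpleGraph V) : ℕ := sInf {t : ℕ | PCFColorable G t}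

/-- `(B x : x : ι)` is a tree-decomposition of `G` with underlying tree `T`. -/
structure IsTreeDecomp (G : SimpleGraph V) {ι : Type*} (T : SimpleGraph ι) (B : ι → Set V) :
    Prop where
  tree : T.IsTree
  bags_connected : ∀ vv : V, (T.induce {x : ι | vv ∈ B x}).Connected
  edge_in_bag : ∀ ⦃a b : V⦄, G.Adj a b → ∃ x : ι, a ∈ B x ∧ b ∈ B x

/-- The torso of a tree-decomposition at a node `x`. -/
def torso (G : SimpleGraph V) {ι : Type*} (T : SimpleGraph ι) (B : ι → Set V) (x : ι) :
    SimpleGraph (B x) :=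
  SimpleGraph.fromRel fun a b =>
    G.Adj a b ∨ ∃ y : ι, T.Adj x y ∧ (a : V) ∈ B y ∧ (b : V) ∈ B y

/-- The frame of a tree-decomposition at a node `x`. -/
def frame (G : SimpleGraph V) {ι : Type*} (T : SimpleGraph ι) (B : ι → Set V) (x : ι) :
    Set (Set (B x)) :=
  {s : Set (B x) | ∃ y : ι, T.Adj x y ∧ s = {a : B x | (a : V) ∈ B y}}

/-- A subgraph `H` of `G` is `C`-compatible: every edge of `H` has both ends in some member
of `C`. -/
def Compatible (C : Set (Set V)) (H : SimpleGraph V) : Prop :=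
  ∀ ⦃a b : V⦄, H.Adj a b → ∃ c ∈ C, a ∈ c ∧ b ∈ c

/-- `G` is `(S,C,L,t)`-extendable. -/
def Extendable (S : Set ℕ) (G : SimpleGraph V) (C : Set (Set V)) (L : V → Finset ℕ)
    (t : ℕ) : Prop :=
  ∀ (Wc : Set V), G.IsClique Wc → Wc.ncard ≤ t →
  ∀ (H : SimpleGraph V), H ≤ G → Compatible C H →
  ∀ (φW : V → ℕ), (∀ w ∈ Wc, φW w ∈ L w) →
    (∀ a ∈ Wc, ∀ b ∈ Wc, G.Adj a b → φW a ≠ φW b) →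
  ∀ (f : V → ℕ) (g : V → Bool),
  ∃ φ : V → ℕ, (∀ w, φ w ∈ L w) ∧ Proper G φ ∧ (∀ w ∈ Wc, φ w = φW w) ∧
    (∀ w ∈ Wc, g w = false → ∀ u : V, G.Adj w u → u ∉ Wc → φ u ≠ f w) ∧
    (∀ w : V, (w ∉ Wc ∨ (w ∈ Wc ∧ g w = true)) →
      (((G \ H).neighborSet w = ∅) ∨
        ∃ c : ℕ, {u : V | (G \ H).Adj w u ∧ φ u = c}.ncard ∈ S))

/-- `H` is a minor of `G` (branch-set definition). -/
def IsMinor (H : SimpleGraph W) (G : SimpleGraph V) : Prop :=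
  ∃ ρ : W → Set V,
    (∀ w : W, (G.induce (ρ w)).Connected) ∧
    (Pairwise fun a b => Disjoint (ρ a) (ρ b)) ∧
    ∀ ⦃a b : W⦄, H.Adj a b → ∃ x ∈ ρ a, ∃ y ∈ ρ b, G.Adj x y

/-- The spanning subgraph of `G` whose edges are those between `A` and its complement. -/
def crossGraph (G : SimpleGraph V) (A : Set V) : SimpleGraph V :=
  SimpleGraph.fromRel fun x y => G.Adj x y ∧ x ∈ A ∧ y ∉ A

/-- The odd contraction of `G` determined by the bipartition `{A, Aᶜ}`: contract each
connected component of the spanning bipartite subgraph between `A` and `Aᶜ`. -/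
def oddContract (G : SimpleGraph V) (A : Set V) :
    SimpleGraph ((crossGraph G A).ConnectedComponent) :=
  SimpleGraph.fromRel fun Ct Dt =>
    ∃ x y : V, (crossGraph G A).connectedComponentMk x = Ct ∧
      (crossGraph G A).connectedComponentMk y = Dt ∧ G.Adj x y

/-- `OddContractions G H`: `H` is obtained from `G` by repeatedly applying odd
contractions. -/
inductive OddContractions : ∀ {α : Type u}, SimpleGraph α → ∀ {β : Type u}, SimpleGraph β → Prop
  | refl {α : Type u} (G : SimpleGraph α) : OddContractions G G
  | step {α : Type u} (G : SimpleGraph α) (A : Set α) {β : Type u} {H : SimpleGraph β} :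
      OddContractions (oddContract G A) H → OddContractions G H

/-- `H` is an odd minor of `G`: `H` is isomorphic to a graph obtained from a subgraph of `G`
by repeatedly applying odd contractions. -/
def IsOddMinor (H : SimpleGraph W) (G : SimpleGraph V) : Prop :=
  ∃ (s : Set V) (G₀ : SimpleGraph s), G₀ ≤ G.induce s ∧
    ∃ (β : Type u) (K : SimpleGraph β), OddContractions G₀ K ∧ Nonempty (H ≃g K)

/-- The graph obtained from `H` by subdividing each edge `e` exactly `n e` times, where
`σ` chooses an orientation of each edge. -/
def subdivGraph (H : SimpleGraph W) (σ : H.edgeSet → W × W) (n : H.edgeSet → ℕ) :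
    SimpleGraph (W ⊕ (Σ e : H.edgeSet, Fin (n e))) :=
  SimpleGraph.fromRel fun a b =>
    (∃ (x y : W) (h : H.Adj x y),
        a = Sum.inl x ∧ b = Sum.inl y ∧ n ⟨s(x, y), H.mem_edgeSet.mpr h⟩ = 0) ∨
    (∃ (x : W) (p : Σ e : H.edgeSet, Fin (n e)), a = Sum.inl x ∧ b = Sum.inr p ∧
        ((x = (σ p.1).1 ∧ (p.2 : ℕ) = 0) ∨ (x = (σ p.1).2 ∧ (p.2 : ℕ) = n p.1 - 1))) ∨
    (∃ p q : Σ e : H.edgeSet, Fin (n e), a = Sum.inr p ∧ b = Sum.inr q ∧ p.1 = q.1 ∧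
        (p.2 : ℕ) + 1 = (q.2 : ℕ))

/-- `σ` is a valid orientation of the edges of `H`. -/
def ValidOrientation (H : SimpleGraph W) (σ : H.edgeSet → W × W) : Prop :=
  ∀ e : H.edgeSet, s((σ e).1, (σ e).2) = (e : Sym2 W)

/-- `G` contains a subdivision of `H` as a subgraph. -/
def ContainsSubdivision (H : SimpleGraph W) (G : SimpleGraph V) : Prop :=
  ∃ (σ : H.edgeSet → W × W) (n : H.edgeSet → ℕ), ValidOrientation H σ ∧
    ∃ f : subdivGraph H σ n →g G, Function.Injective f

/-- The strong product of two graphs. -/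
def strongProd {α : Type*} {β : Type*} (A : SimpleGraph α) (B : SimpleGraph β) :
    SimpleGraph (α × β) :=
  SimpleGraph.fromRel fun p q =>
    (A.Adj p.1 q.1 ∧ p.2 = q.2) ∨ (p.1 = q.1 ∧ B.Adj p.2 q.2) ∨
      (A.Adj p.1 q.1 ∧ B.Adj p.2 q.2)


/-- A layering of `G`. -/
def IsLayering (G : SimpleGraph V) (Vl : ℕ → Set V) : Prop :=
  (∀ vv : V, ∃ i : ℕ, vv ∈ Vl i) ∧ (Pairwise fun i j => Disjoint (Vl i) (Vl j)) ∧
  ∀ ⦃a b : V⦄, G.Adj a b → ∃ i : ℕ, a ∈ Vl i ∪ Vl (i + 1) ∧ b ∈ Vl i ∪ Vl (i + 1)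

/-!
Let `G` contain no 1-subdivision of a graph of average degree at least `k`. For disjoint `A` and
`B`, a maximal graph on `A` whose 1-subdivision has its subdivision vertices in `B` has few edges;
if `#B ≥ k * #A`, some `b ∈ B` stays unused, its neighbours in `A` form a clique of that graph, and
so `b` has at most `k` of them. Choosing `A` to saturate the vertices of high degree, one finds that
most vertices of any `S` have bounded degree into `S`. Taking `A = S` and `B = Sᶜ`, on average a
vertex of `S` shares a neighbour outside `S` with boundedly many others. Removing good vertices one
at a time gives an ordering in which every vertex has few earlier neighbours and few earlier
vertices with a common later neighbour, and a greedy colouring keeps the colour of the first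
neighbour of each vertex unique around that vertex.

For the chromatic number, a dense graph contains disjoint `A` and `B` with `#B` much larger than
`#A` and every `b ∈ B` having more than `m` neighbours in `A`. Each `m`-colouring of `A` repeats a
colour on the neighbours of each `b`, so a union bound gives a choice of one pair of neighbours for
each `b` such that no `m`-colouring is proper for all the pairs.
-/

/-- `f` and `m` give a copy of the 1-subdivision of `H` in `G`: `f` lists the branch vertices and
`m` the subdivision vertices. The values of `m` off `H.edgeSet` are irrelevant. -/
structure IsOneSubdivision {α : Type*} (H : SimpleGraph α) (G : SimpleGraph V) (f : α → V)
    (m : Sym2 α → V) : Prop where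
  injective : Function.Injective f
  injOn : Set.InjOn m H.edgeSet
  ne : ∀ x, ∀ e ∈ H.edgeSet, f x ≠ m e
  adj : ∀ e ∈ H.edgeSet, ∀ x ∈ e, G.Adj (f x) (m e)

/-- `G` contains a subgraph that is a 1-subdivision of `H`. Unlike `subdivGraph`, this needs no
orientation of the edges of `H`. -/
def ContainsOneSubdivision {α : Type*} (H : SimpleGraph α) (G : SimpleGraph V) : Prop :=
  ∃ f m, IsOneSubdivision H G f m

section Subdivision

variable {α β ι : Type*} {H : SimpleGraph α} {G : SimpleGraph V}

theorem exists_validOrientation (H : SimpleGraph α) :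
    ∃ σ : H.edgeSet → α × α, ValidOrientation H σ :=
  ⟨fun e => Quot.out e.1, fun e => Quot.out_eq e.1⟩

theorem ValidOrientation.fst_mem {σ : H.edgeSet → α × α} (hσ : ValidOrientation H σ)
    (e : H.edgeSet) : (σ e).1 ∈ (e : Sym2 α) :=
  hσ e ▸ Sym2.mem_mk_left _ _

theorem ValidOrientation.snd_mem {σ : H.edgeSet → α × α} (hσ : ValidOrientation H σ)
    (e : H.edgeSet) : (σ e).2 ∈ (e : Sym2 α) :=
  hσ e ▸ Sym2.mem_mk_right _ _

theorem ValidOrientation.fst_ne_snd {σ : H.edgeSet → α × α} (hσ : ValidOrientation H σ)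
    (e : H.edgeSet) : (σ e).1 ≠ (σ e).2 :=
  H.ne_of_adj (H.mem_edgeSet.mp (hσ e ▸ e.2))

theorem fromRel_le {r : α → α → Prop} (h : ∀ x y, r x y → H.Adj x y) : fromRel r ≤ H :=
  fun x y hxy => hxy.2.elim (h x y) fun hyx => (h y x hyx).symm

theorem exists_injective_subdivGraph_hom {σ : H.edgeSet → α × α} {n : ℕ} {f : α → V}
    {g : H.edgeSet → Fin (n + 1) → V} (hf : Function.Injective f)
    (hg : ∀ e i e' j, g e i = g e' j → e = e' ∧ i = j) (hfg : ∀ x e i, f x ≠ g e i)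
    (hfst : ∀ e, G.Adj (f (σ e).1) (g e 0)) (hsnd : ∀ e, G.Adj (f (σ e).2) (g e (Fin.last n)))
    (hsucc : ∀ e (i : Fin n), G.Adj (g e i.castSucc) (g e i.succ)) :
    ∃ F : subdivGraph H σ (fun _ => n + 1) →g G, Function.Injective F := by
  let F : α ⊕ (Σ _ : H.edgeSet, Fin (n + 1)) → V := Sum.elim f fun p => g p.1 p.2
  have hF : Function.Injective F := by
    refine hf.sumElim ?_ fun x p => hfg x p.1 p.2
    rintro ⟨e, i⟩ ⟨e', j⟩ h
    obtain ⟨rfl, rfl⟩ := hg e i e' j h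
    rfl
  have hle : subdivGraph H σ (fun _ => n + 1) ≤ G.comap F := by
    refine fromRel_le ?_
    rintro a b (⟨x, y, _, rfl, rfl, h⟩ | ⟨x, ⟨e, i⟩, rfl, rfl, h⟩ |
      ⟨⟨e, i⟩, ⟨e', j⟩, rfl, rfl, rfl, h⟩)
    · exact absurd h n.succ_ne_zero
    · rcases h with ⟨rfl, h⟩ | ⟨rfl, h⟩
      · obtain rfl : i = 0 := Fin.ext h
        exact hfst e
      · obtain rfl : i = Fin.last n := Fin.ext h
        exact hsnd e
    · have hi : (i : ℕ) < n := by have := j.isLt; dsimp only at h; omega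
      obtain ⟨i, rfl⟩ : ∃ l : Fin n, l.castSucc = i := ⟨⟨i, hi⟩, rfl⟩
      obtain rfl : j = i.succ := Fin.ext h.symm
      exact hsucc e i
  exact ⟨⟨F, fun h => hle h⟩, hF⟩

theorem ContainsOneSubdivision.exists_subdivGraph_one_hom (h : ContainsOneSubdivision H G) :
    ∃ σ : H.edgeSet → α × α, ValidOrientation H σ ∧
      ∃ F : subdivGraph H σ (fun _ => 1) →g G, Function.Injective F := by
  obtain ⟨f, m, h⟩ := h
  obtain ⟨σ, hσ⟩ := exists_validOrientation H
  refine ⟨σ, hσ, exists_injective_subdivGraph_hom (n := 0) (g := fun e _ => m e) h.injective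
    (fun e i e' j hm => ⟨Subtype.ext (h.injOn e.2 e'.2 hm), Fin.ext (by omega)⟩)
    (fun x e _ => h.ne x e e.2) (fun e => h.adj e e.2 _ (hσ.fst_mem e))
    (fun e => h.adj e e.2 _ (hσ.snd_mem e)) fun _ i => i.elim0⟩

theorem IsOneSubdivision.eq_and_eq_of_mk_eq_mk {f : α → V} {m : Sym2 α → V}
    (h : IsOneSubdivision H G f m) {x y : α} {e e' : Sym2 α} (he : e ∈ H.edgeSet)
    (he' : e' ∈ H.edgeSet) (heq : s(f x, m e) = s(f y, m e')) : x = y ∧ e = e' := by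
  rcases Sym2.eq_iff.mp heq with ⟨hf, hm⟩ | ⟨hf, -⟩
  · exact ⟨h.injective hf, h.injOn he he' hm⟩
  · exact absurd hf (h.ne x e' he')

theorem ContainsOneSubdivision.exists_subdivGraph_three_hom {K : SimpleGraph β}
    (hHK : ContainsOneSubdivision H K) (hKG : ContainsOneSubdivision K G) :
    ∃ σ : H.edgeSet → α × α, ValidOrientation H σ ∧
      ∃ F : subdivGraph H σ (fun _ => 3) →g G, Function.Injective F := by
  obtain ⟨f, m, h⟩ := hHK
  obtain ⟨f', m', h'⟩ := hKG
  obtain ⟨σ, hσ⟩ := exists_validOrientation H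
  have mem_fst (e : H.edgeSet) : s(f (σ e).1, m e) ∈ K.edgeSet := h.adj e e.2 _ (hσ.fst_mem e)
  have mem_snd (e : H.edgeSet) : s(f (σ e).2, m e) ∈ K.edgeSet := h.adj e e.2 _ (hσ.snd_mem e)
  have mid_inj {x y : α} {e e' : H.edgeSet} (hx : s(f x, m e) ∈ K.edgeSet)
      (hy : s(f y, m e') ∈ K.edgeSet) (heq : m' s(f x, m e) = m' s(f y, m e')) :
      x = y ∧ e = e' :=
    (h.eq_and_eq_of_mk_eq_mk e.2 e'.2 (h'.injOn hx hy heq)).imp_right Subtype.ext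
  refine ⟨σ, hσ, exists_injective_subdivGraph_hom (n := 2) (f := f' ∘ f)
    (g := fun e => ![m' s(f (σ e).1, m e), f' (m e), m' s(f (σ e).2, m e)])
    (h'.injective.comp h.injective) ?_ ?_ ?_ ?_ ?_⟩
  · intro e i e' j heq
    fin_cases i <;> fin_cases j
    · exact ⟨(mid_inj (mem_fst e) (mem_fst e') heq).2, rfl⟩
    · exact absurd heq.symm (h'.ne _ _ (mem_fst e))
    · obtain ⟨hx, rfl⟩ := mid_inj (mem_fst e) (mem_snd e') heq
      exact absurd hx (hσ.fst_ne_snd e)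
    · exact absurd heq (h'.ne _ _ (mem_fst e'))
    · exact ⟨Subtype.ext (h.injOn e.2 e'.2 (h'.injective heq)), rfl⟩
    · exact absurd heq (h'.ne _ _ (mem_snd e'))
    · obtain ⟨hx, rfl⟩ := mid_inj (mem_snd e) (mem_fst e') heq
      exact absurd hx.symm (hσ.fst_ne_snd e)
    · exact absurd heq.symm (h'.ne _ _ (mem_snd e))
    · exact ⟨(mid_inj (mem_snd e) (mem_snd e') heq).2, rfl⟩
  · intro x e i heq
    fin_cases i
    · exact h'.ne _ _ (mem_fst e) heq
    · exact h.ne x e e.2 (h'.injective heq)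
    · exact h'.ne _ _ (mem_snd e) heq
  · exact fun e => h'.adj _ (mem_fst e) _ (Sym2.mem_mk_left _ _)
  · exact fun e => h'.adj _ (mem_snd e) _ (Sym2.mem_mk_left _ _)
  · intro e i
    fin_cases i
    · exact (h'.adj _ (mem_fst e) _ (Sym2.mem_mk_right _ _)).symm
    · exact h'.adj _ (mem_snd e) _ (Sym2.mem_mk_right _ _)

theorem IsOneSubdivision.comp_copy {K : SimpleGraph β} {f : α → V} {m : Sym2 α → V}
    (h : IsOneSubdivision H G f m) (c : Copy K H) :
    IsOneSubdivision K G (f ∘ c) (m ∘ Sym2.map c) where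
  injective := h.injective.comp c.injective
  injOn _ he _ he' heq :=
    Sym2.map.injective c.injective <|
      h.injOn (c.toHom.map_mem_edgeSet he) (c.toHom.map_mem_edgeSet he') heq
  ne _ _ he := h.ne _ _ (c.toHom.map_mem_edgeSet he)
  adj _ he x hx := h.adj _ (c.toHom.map_mem_edgeSet he) _ (Sym2.mem_map.mpr ⟨x, hx, rfl⟩)

theorem containsOneSubdivision_fromEdgeSet_range {f : α → V} {b : ι → V} {e : ι → Sym2 α}
    (hf : Function.Injective f) (hb : Function.Injective b) (hfb : ∀ x i, f x ≠ b i)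
    (hadj : ∀ i, ∀ x ∈ e i, G.Adj (f x) (b i)) :
    ContainsOneSubdivision (fromEdgeSet (Set.range e)) G := by
  have hsection (q : Sym2 α) : ∃ v, q ∈ Set.range e → ∃ i, e i = q ∧ b i = v := by
    by_cases hq : q ∈ Set.range e
    · obtain ⟨i, hi⟩ := hq
      exact ⟨b i, fun _ => ⟨i, hi, rfl⟩⟩
    · exact ⟨f (Quot.out q).1, fun h => absurd h hq⟩
  choose m hm using hsection
  have hm' {q} (hq : q ∈ (fromEdgeSet (Set.range e)).edgeSet) : ∃ i, e i = q ∧ b i = m q :=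
    hm q (edgeSet_fromEdgeSet _ ▸ hq).1
  refine ⟨f, m, hf, fun q hq q' hq' heq => ?_, fun x q hq => ?_, fun q hq x hx => ?_⟩
  · obtain ⟨i, rfl, hi⟩ := hm' hq
    obtain ⟨j, rfl, hj⟩ := hm' hq'
    rw [hb (hi.trans (heq.trans hj.symm))]
  · obtain ⟨i, -, hi⟩ := hm' hq
    exact hi ▸ hfb x i
  · obtain ⟨i, rfl, hi⟩ := hm' hq
    exact hi ▸ hadj i x hx

theorem IsOneSubdivision.sup_edge [DecidableEq α] {f : α → V} {m : Sym2 α → V} {x y : α} {b : V}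
    (h : IsOneSubdivision H G f m) (hxy : ¬ H.Adj x y) (hfb : ∀ z, f z ≠ b)
    (hmb : ∀ e ∈ H.edgeSet, m e ≠ b) (hx : G.Adj (f x) b) (hy : G.Adj (f y) b) :
    IsOneSubdivision (H ⊔ edge x y) G f (Function.update m s(x, y) b) := by
  have hm {e} (he : e ∈ H.edgeSet) : Function.update m s(x, y) b e = m e :=
    Function.update_of_ne (fun h : e = s(x, y) => hxy (H.mem_edgeSet.mp (h ▸ he))) _ _
  have hcases {e} (he : e ∈ (H ⊔ edge x y).edgeSet) : e ∈ H.edgeSet ∨ e = s(x, y) :=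
    (edgeSet_sup _ _ ▸ he).imp id fun h => edgeSet_edge_subset h
  refine ⟨h.injective, fun e he e' he' heq => ?_, fun z e he => ?_, fun e he z hz => ?_⟩
  · rcases hcases he with he | rfl <;> rcases hcases he' with he' | rfl
    · exact h.injOn he he' (by rwa [hm he, hm he'] at heq)
    · exact absurd (by rwa [hm he, Function.update_self] at heq) (hmb e he)
    · exact absurd (by rwa [hm he', Function.update_self, eq_comm] at heq) (hmb e' he')
    · rfl
  · rcases hcases he with he | rfl
    · exact (hm he).symm ▸ h.ne z e he
    · exact (Function.update_self (f := m) s(x, y) b).symm ▸ hfb z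
  · rcases hcases he with he | rfl
    · exact (hm he).symm ▸ h.adj e he z hz
    · rw [Function.update_self]
      rcases Sym2.mem_iff.mp hz with rfl | rfl
      exacts [hx, hy]

end Subdivision

section EliminationOrder

open Finset

open scoped Classical in
theorem exists_linearOrder_of_elimination [Fintype V] {I : Finset V → Prop}
    {P : Finset V → V → Prop} (huniv : I univ)
    (h : ∀ S : Finset V, S.Nonempty → I S → ∃ v ∈ S, P S v ∧ I (S.erase v)) :
    ∃ _ : LinearOrder V, ∀ v, P {u | u ≤ v} v := by
  have hrank (S : Finset V) (hI : I S) :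
      ∃ r : V → ℕ, Set.InjOn r S ∧ ∀ v ∈ S, P {u ∈ S | r u ≤ r v} v := by
    induction S using Finset.strongInduction with
    | H S ih =>
      obtain rfl | hS := S.eq_empty_or_nonempty
      · exact ⟨fun _ => 0, by simp⟩
      obtain ⟨v, hv, hPv, hIv⟩ := h S hS hI
      obtain ⟨r, hr, hPr⟩ := ih (S.erase v) (erase_ssubset hv) hIv
      have hlt {u} (hu : u ∈ S) (huv : u ≠ v) : r u < (S.erase v).sup r + 1 :=
        Nat.lt_succ_of_le (le_sup (mem_erase.mpr ⟨huv, hu⟩))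
      refine ⟨Function.update r v ((S.erase v).sup r + 1), fun u hu w hw huw => ?_, fun w hw => ?_⟩
      · grind [Set.InjOn]
      · by_cases hwv : w = v
        · convert hPv using 1
          grind
        · convert hPr w (mem_erase.mpr ⟨hwv, hw⟩) using 1
          grind
  obtain ⟨r, hr, hP⟩ := hrank univ huniv
  refine ⟨LinearOrder.lift' r (Set.injOn_univ.mp (coe_univ (α := V) ▸ hr)), fun v => ?_⟩
  convert hP v (mem_univ v)
  rfl

open scoped Classical in
theorem exists_forall_le_card_neighbors [Fintype V] {G : SimpleGraph V} {D : ℕ}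
    (h : D * Fintype.card V < G.edgeSet.ncard) :
    ∃ S : Finset V, S.Nonempty ∧ ∀ v ∈ S, D ≤ #{u ∈ S | G.Adj v u} := by
  by_contra! hcon
  obtain ⟨_, hlt⟩ := exists_linearOrder_of_elimination (I := fun _ => True) trivial
    fun S hS _ => let ⟨v, hv, hlt⟩ := hcon S hS; ⟨v, hv, hlt, trivial⟩
  have hcover : G.edgeFinset ⊆
      univ.biUnion fun v => ({u ∈ {u | u ≤ v} | G.Adj v u} : Finset V).image (s(v, ·)) := by
    intro e
    induction e with
    | h x y =>
      intro hxy
      rw [mem_edgeFinset, mem_edgeSet] at hxy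
      simp only [mem_biUnion, mem_univ, mem_image, mem_filter, true_and]
      rcases le_total x y with hle | hle
      · exact ⟨y, x, ⟨hle, hxy.symm⟩, Sym2.eq_swap⟩
      · exact ⟨x, y, ⟨hle, hxy⟩, rfl⟩
  have hcard := (card_le_card hcover).trans <|
    card_biUnion_le_card_mul univ _ D fun v _ => card_image_le.trans (hlt v).le
  rw [← coe_edgeFinset, Set.ncard_coe_finset] at h
  rw [card_univ, mul_comm] at hcard
  exact h.not_ge hcard

open scoped Classical in
theorem exists_choice_forall_ne_of_card_lt {C : Type*} [LinearOrder V] [WellFoundedLT V]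
    {L : V → Finset C} {F : V → Finset V} (hF : ∀ v, ∀ u ∈ F v, u < v)
    (hcard : ∀ v, #(F v) < #(L v)) : ∃ φ : V → C, ∀ v, φ v ∈ L v ∧ ∀ u ∈ F v, φ u ≠ φ v := by
  have hext (v : V) (ψ : ∀ u, u < v → C) : ∃ c ∈ L v, ∀ u (hu : u ∈ F v), ψ u (hF v u hu) ≠ c := by
    obtain ⟨c, hc, hcF⟩ := exists_mem_notMem_of_card_lt_card
      (((card_image_le (s := (F v).attach) (f := fun u => ψ u (hF v u u.2))).trans_eq
        card_attach).trans_lt (hcard v))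
    exact ⟨c, hc, fun u hu heq => hcF (mem_image.mpr ⟨⟨u, hu⟩, mem_attach _ _, heq⟩)⟩
  choose g hgL hgF using hext
  refine ⟨wellFounded_lt.fix g, fun v => ?_⟩
  rw [wellFounded_lt.fix_eq g v]
  exact ⟨hgL v _, fun u hu => hgF v (fun u _ => wellFounded_lt.fix g u) u hu⟩

open scoped Classical in
/- Colour greedily so that in every neighbourhood the colour of its first vertex is not repeated.
If `x` is the first neighbour of `w`, then another neighbour `v` of `w` can avoid the colour of `x`
for one of two reasons: `w < v` and `x` is determined by the earlier neighbour `w` of `v`, or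
`v < w` and `x` is counted by `q`. -/
theorem cfChoosable_of_card_earlier_le [Fintype V] [LinearOrder V] {G : SimpleGraph V} {p q : ℕ}
    (hp : ∀ v, #{u | u < v ∧ G.Adj v u} ≤ p)
    (hq : ∀ v, #{u | u < v ∧ ∃ w, v < w ∧ G.Adj w v ∧ G.Adj w u} ≤ q) :
    CFChoosable G (2 * p + q + 1 : ℕ) := by
  intro L hL
  have hfirst (w : V) : ∃ x, (G.neighborSet w).Nonempty → G.Adj w x ∧ ∀ u, G.Adj w u → x ≤ u := by
    by_cases hw : (G.neighborSet w).Nonempty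
    · obtain ⟨x, hx, hmin⟩ := (G.neighborSet w).toFinite.exists_minimalFor id _ hw
      exact ⟨x, fun _ => ⟨hx, fun u hu => (le_total x u).elim id (hmin hu)⟩⟩
    · exact ⟨w, fun h => absurd h hw⟩
  choose first hfirst using hfirst
  let N (v : V) : Finset V := {u | u < v ∧ G.Adj v u}
  let Q (v : V) : Finset V := {u | u < v ∧ ∃ w, v < w ∧ G.Adj w v ∧ G.Adj w u}
  obtain ⟨φ, hφ⟩ := exists_choice_forall_ne_of_card_lt (L := L)
    (F := fun v => N v ∪ {x ∈ (N v).image first | x < v} ∪ Q v)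
    (fun v u hu => by
      simp only [N, Q, mem_union, mem_filter, mem_univ, true_and] at hu
      exact hu.elim (fun h => h.elim And.left And.right) And.left)
    (fun v => by
      have hNQ : #(N v ∪ {x ∈ (N v).image first | x < v} ∪ Q v) ≤ p + p + q :=
        (card_union_le _ _).trans <| add_le_add ((card_union_le _ _).trans <|
          add_le_add (hp v) ((card_filter_le _ _).trans (card_image_le.trans (hp v)))) (hq v)
      have hLv : 2 * p + q + 1 ≤ #(L v) := by exact_mod_cast hL v
      omega)
  have hearlier {u v} (huv : u < v) (h : G.Adj v u) : φ u ≠ φ v :=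
    (hφ v).2 u <| by simp [N, huv, h]
  refine ⟨φ, fun v => (hφ v).1, fun u v huv => ?_, fun w hw => ⟨φ (first w), ?_⟩⟩
  · rcases lt_or_gt_of_ne huv.ne with hlt | hlt
    exacts [hearlier hlt huv.symm, (hearlier hlt huv).symm]
  · obtain ⟨hwx, hmin⟩ := hfirst w hw
    refine Set.ncard_eq_one.mpr ⟨first w, Set.eq_singleton_iff_unique_mem.mpr ⟨⟨hwx, rfl⟩, ?_⟩⟩
    rintro v ⟨hwv, hcol⟩
    by_contra hne
    have hlt : first w < v := (hmin v hwv).lt_of_ne' hne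
    refine (hφ v).2 (first w) ?_ hcol.symm
    rcases lt_or_gt_of_ne hwv.ne with hwv' | hvw
    · have hw : w ∈ N v := by simp [N, hwv', hwv.symm]
      exact mem_union_left _ (mem_union_right _ (mem_filter.mpr ⟨mem_image_of_mem _ hw, hlt⟩))
    · exact mem_union_right _ (by simpa [Q, hlt] using ⟨w, hvw, hwv, hwx⟩)

end EliminationOrder

section DensePairs

open Finset

variable {G : SimpleGraph V}

open scoped Classical in
/- `A` is a largest subset of `S` with `C * #A ≤ ∑ v ∈ T, min d #{a ∈ A | G.Adj v a}`; a vertex with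
`C` unsaturated neighbours could be added to it. -/
theorem exists_saturating_subset (G : SimpleGraph V) (S T : Finset V) (C d : ℕ) :
    ∃ A ⊆ S, C * #A ≤ d * #T ∧
      ∀ x ∈ S \ A, #{v ∈ T | G.Adj v x ∧ #{a ∈ A | G.Adj v a} < d} < C := by
  let weight (A : Finset V) : ℕ := ∑ v ∈ T, min d #{a ∈ A | G.Adj v a}
  obtain ⟨A, hA, hmax⟩ := exists_max_image {A ∈ S.powerset | C * #A ≤ weight A} card
    ⟨∅, by simp⟩
  simp only [mem_filter, mem_powerset] at hA hmax
  refine ⟨A, hA.1, hA.2.trans ?_, fun x hx => ?_⟩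
  · rw [mul_comm, ← smul_eq_mul]
    exact sum_le_card_nsmul _ _ _ fun v _ => min_le_left _ _
  · rw [mem_sdiff] at hx
    by_contra! hC
    have hweight : weight A + #{v ∈ T | G.Adj v x ∧ #{a ∈ A | G.Adj v a} < d} ≤
        weight (insert x A) := by
      rw [card_filter, ← sum_add_distrib]
      refine sum_le_sum fun v _ => ?_
      rw [filter_insert]
      by_cases hvx : G.Adj v x
      · rw [if_pos hvx, card_insert_of_notMem (by simp [hx.2])]
        split_ifs <;> omega
      · simp [hvx]
    have hinsert := hmax (insert x A) ⟨insert_subset hx.1 hA.1, by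
      rw [card_insert_of_notMem hx.2, mul_add, mul_one]
      exact (add_le_add hA.2 hC).trans hweight⟩
    rw [card_insert_of_notMem hx.2] at hinsert
    exact absurd hinsert (Nat.lt_succ_self _).not_ge

open scoped Classical in
theorem exists_disjoint_forall_le_card_neighbors {S T : Finset V} {d N : ℕ} (hd : 0 < d)
    (hS : S.Nonempty) (hST : #S ≤ 2 * #T)
    (hdeg : ∀ v ∈ T, d * (8 * N + 9) ≤ #{u ∈ S | G.Adj v u}) :
    ∃ A B : Finset V, Disjoint A B ∧ A.Nonempty ∧ N * #A ≤ #B ∧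
      ∀ b ∈ B, d ≤ #{a ∈ A | G.Adj b a} := by
  obtain ⟨A, -, hA, hunsat⟩ := exists_saturating_subset G S T (2 * d * (N + 1)) d
  let U : Finset V := {v ∈ T | #{a ∈ A | G.Adj v a} < d}
  have hUdeg : ∀ v ∈ U, 4 * (2 * d * (N + 1)) ≤ #{x ∈ S \ A | G.Adj v x} := by
    intro v hv
    obtain ⟨hvT, hvA⟩ := mem_filter.mp hv
    have hsplit : ({u ∈ S | G.Adj v u} : Finset V) ⊆
        {x ∈ S \ A | G.Adj v x} ∪ {a ∈ A | G.Adj v a} := by grind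
    have := (hdeg v hvT).trans ((card_le_card hsplit).trans (card_union_le _ _))
    linarith
  have hU : 4 * #U ≤ #S := by
    have hcount := card_mul_le_card_mul G.Adj hUdeg (t := S \ A) (n := 2 * d * (N + 1))
      fun x hx => by simpa [bipartiteBelow, U, filter_filter, and_comm] using (hunsat x hx).le
    have hSA : #(S \ A) ≤ #S := card_le_card sdiff_subset
    nlinarith [Nat.mul_le_mul_right (2 * d * (N + 1)) hSA, show 0 < 2 * d * (N + 1) by positivity]
  have hAcard : 2 * ((N + 1) * #A) ≤ #T :=
    Nat.le_of_mul_le_mul_left (by linarith : d * (2 * ((N + 1) * #A)) ≤ d * #T) hd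
  have hBdeg : ∀ b ∈ (T \ A) \ U, d ≤ #{a ∈ A | G.Adj b a} := by grind
  have hBcard : #T ≤ #((T \ A) \ U) + #A + #U := by
    have hcover : T ⊆ (T \ A) \ U ∪ A ∪ U := by grind
    exact (card_le_card hcover).trans
      ((card_union_le _ _).trans (Nat.add_le_add_right (card_union_le _ _) _))
  refine ⟨A, (T \ A) \ U, disjoint_sdiff.mono_right sdiff_subset, ?_, by linarith, hBdeg⟩
  rw [nonempty_iff_ne_empty]
  rintro rfl
  have hB : (T \ ∅) \ U = ∅ := eq_empty_of_forall_notMem fun b hb =>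
    absurd (hBdeg b hb) (by simpa using hd.ne')
  rw [hB, card_empty] at hBcard
  have hSpos := hS.card_pos
  omega

end DensePairs

section Chromatic

open Finset

open scoped Classical in
theorem card_filter_subtype {α : Type*} (s : Finset α) (p : α → Prop) :
    #{a ∈ s | p a} = #({a | p a} : Finset s) := by
  rw [← card_map (Function.Embedding.subtype _)]
  congr 1
  ext
  simp [and_comm]

theorem exists_mul_pow_lt_pow {a b : ℕ} (hab : a < b) (c : ℕ) : ∃ N, c * a ^ N < b ^ N := by
  have hb : (0 : ℚ) < b := by exact_mod_cast a.zero_le.trans_lt hab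
  obtain ⟨N, hN⟩ := exists_pow_lt_of_lt_one (show (0 : ℚ) < 1 / (c + 1) by positivity)
    ((div_lt_one hb).mpr (Nat.cast_lt.mpr hab))
  rw [div_pow, div_lt_div_iff₀ (by positivity) (by positivity), one_mul] at hN
  refine ⟨N, ?_⟩
  have hN' : a ^ N * (c + 1) < b ^ N := by exact_mod_cast hN
  nlinarith [Nat.zero_le (a ^ N)]

open scoped Classical in
/- Each `f` is missed by at most `(K - 1) ^ card ι` of the `K ^ card ι` choices `p`. -/
theorem exists_choice_forall_exists_of_card_mul_pow_lt {ι Φ Ω : Type*} [Fintype ι]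
    [Fintype Φ] {t : ι → Finset Ω} {K : ℕ} {R : Φ → Ω → Prop} (ht : ∀ i, #(t i) = K)
    (hR : ∀ f i, ∃ o ∈ t i, R f o)
    (hcard : Fintype.card Φ * (K - 1) ^ Fintype.card ι < K ^ Fintype.card ι) :
    ∃ p : ι → Ω, (∀ i, p i ∈ t i) ∧ ∀ f, ∃ i, R f (p i) := by
  by_contra! hcon
  have hcover : Fintype.piFinset t ⊆
      univ.biUnion fun f => Fintype.piFinset fun i => {o ∈ t i | ¬ R f o} := by
    intro p hp
    obtain ⟨f, hf⟩ := hcon p (Fintype.mem_piFinset.mp hp)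
    simpa using ⟨f, fun i => ⟨Fintype.mem_piFinset.mp hp i, hf i⟩⟩
  have hmiss (f : Φ) :
      #(Fintype.piFinset fun i => {o ∈ t i | ¬ R f o}) ≤ (K - 1) ^ Fintype.card ι := by
    rw [Fintype.card_piFinset]
    refine prod_le_pow_card _ _ _ fun i _ => ?_
    obtain ⟨o, ho, hRo⟩ := hR f i
    refine Nat.le_sub_one_of_lt (ht i ▸ card_lt_card ?_)
    exact filter_ssubset.mpr ⟨o, ho, not_not_intro hRo⟩
  have hle := (card_le_card hcover).trans (card_biUnion_le_card_mul _ _ _ fun f _ => hmiss f)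
  simp only [Fintype.card_piFinset, ht, prod_const, card_univ] at hle
  exact hcard.not_ge hle

open scoped Classical in
theorem exists_not_colorable_containsOneSubdivision_of_pow_lt {G : SimpleGraph V}
    {A B : Finset V} {m : ℕ} (hAB : Disjoint A B) (hB : ∀ b ∈ B, m + 1 ≤ #{a ∈ A | G.Adj b a})
    (hcard : m ^ #A * ((m + 1) * m - 1) ^ #B < ((m + 1) * m) ^ #B) :
    ∃ H : SimpleGraph A, ¬ H.Colorable m ∧ ContainsOneSubdivision H G := by
  have hnbrs (b : B) : ∃ s : Finset A, #s = m + 1 ∧ ∀ a ∈ s, G.Adj b a := by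
    obtain ⟨s, hs, hcard⟩ := exists_subset_card_eq
      (card_filter_subtype A (G.Adj b) ▸ hB b b.2)
    exact ⟨s, hcard, fun a ha => (mem_filter.mp (hs ha)).2⟩
  choose s hs hadj using hnbrs
  obtain ⟨p, hp, hmono⟩ := exists_choice_forall_exists_of_card_mul_pow_lt
    (t := fun b => (s b).offDiag) (R := fun (f : A → Fin m) o => f o.1 = f o.2) (K := (m + 1) * m)
    (fun b => by rw [offDiag_card, hs, mul_add, mul_one, Nat.add_sub_cancel])
    (fun f b => by
      obtain ⟨x, hx, y, hy, hxy, hf⟩ := exists_ne_map_eq_of_card_lt_of_maps_to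
        (s := s b) (t := univ) (f := f) (by simp [hs]) (fun _ _ => mem_univ _)
      exact ⟨(x, y), mem_offDiag.mpr ⟨hx, hy, hxy⟩, hf⟩)
    (by simpa using hcard)
  simp only [mem_offDiag] at hp
  refine ⟨fromEdgeSet (Set.range fun b => s((p b).1, (p b).2)), ?_,
    containsOneSubdivision_fromEdgeSet_range Subtype.val_injective Subtype.val_injective
      (fun a b h => disjoint_left.mp hAB a.2 (h ▸ b.2)) ?_⟩
  · rintro ⟨C⟩
    obtain ⟨b, hb⟩ := hmono C
    exact C.valid ((fromEdgeSet_adj _).mpr ⟨⟨b, rfl⟩, (hp b).2.2⟩) hb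
  · intro b x hx
    rcases Sym2.mem_iff.mp hx with rfl | rfl
    exacts [(hadj b _ (hp b).1).symm, (hadj b _ (hp b).2.1).symm]

open scoped Classical in
theorem exists_ratio_forall_exists_not_colorable {m : ℕ} (hm : 0 < m) :
    ∃ N : ℕ, ∀ {V : Type u} {G : SimpleGraph V} {A B : Finset V}, Disjoint A B → A.Nonempty →
      N * #A ≤ #B → (∀ b ∈ B, m + 1 ≤ #{a ∈ A | G.Adj b a}) →
      ∃ H : SimpleGraph A, ¬ H.Colorable m ∧ ContainsOneSubdivision H G := by
  obtain ⟨N, hN⟩ := exists_mul_pow_lt_pow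
    (Nat.sub_lt (by positivity : 0 < (m + 1) * m) one_pos) m
  refine ⟨N, fun {V G A B} hAB hA hcard hB => ?_⟩
  obtain ⟨B', hB'B, hB'⟩ := exists_subset_card_eq hcard
  refine exists_not_colorable_containsOneSubdivision_of_pow_lt (hAB.mono_right hB'B)
    (fun b hb => hB b (hB'B hb)) ?_
  rw [hB', pow_mul, pow_mul, ← mul_pow]
  exact Nat.pow_lt_pow_left hN hA.card_pos.ne'

theorem exists_averageDegree_forall_exists_not_colorable {m : ℕ} (hm : 0 < m) :
    ∃ K : ℕ, ∀ {α : Type u} [Fintype α] [Nonempty α] {H : SimpleGraph α},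
      K * Fintype.card α ≤ 2 * H.edgeSet.ncard →
      ∃ (β : Type u) (_ : Fintype β) (H' : SimpleGraph β),
        ¬ H'.Colorable m ∧ ContainsOneSubdivision H' H := by
  obtain ⟨N, hN⟩ := exists_ratio_forall_exists_not_colorable.{u} hm
  refine ⟨2 * ((m + 1) * (8 * N + 9) + 1), fun {α} _ _ {H} hH => ?_⟩
  have hα : 0 < Fintype.card α := Fintype.card_pos
  obtain ⟨S, hS, hdeg⟩ := exists_forall_le_card_neighbors
    (by linarith : (m + 1) * (8 * N + 9) * Fintype.card α < H.edgeSet.ncard)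
  obtain ⟨A, B, hAB, hA, hcard, hB⟩ := exists_disjoint_forall_le_card_neighbors m.succ_pos
    hS (Nat.le_mul_of_pos_left _ two_pos) hdeg
  obtain ⟨H', hH'⟩ := hN hAB hA hcard hB
  exact ⟨A, inferInstance, H', hH'⟩

end Chromatic

section Sparse

open Finset

variable {G : SimpleGraph V} {k : ℕ}

/-- Every nonempty finite graph whose 1-subdivision is contained in `G` has average degree less
than `k`. -/
def OneSubdivisionSparse (G : SimpleGraph V) (k : ℕ) : Prop :=
  ∀ ⦃α : Type u⦄ [Fintype α] [Nonempty α] (H : SimpleGraph α),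
    ContainsOneSubdivision H G → 2 * H.edgeSet.ncard < k * Fintype.card α

open scoped Classical in
/-- The vertices of `S` other than `v` that have a common neighbour with `v` outside `S`. In an
ordering where `S` comes before the other vertices, these are the vertices whose colours `v` has to
avoid because of a later common neighbour. -/
noncomputable def outerSecondNeighbors (G : SimpleGraph V) (S : Finset V) (v : V) :
    Finset V :=
  {u ∈ S | u ≠ v ∧ ∃ w ∉ S, G.Adj w v ∧ G.Adj w u}

theorem mem_outerSecondNeighbors {S : Finset V} {u v : V} :
    u ∈ outerSecondNeighbors G S v ↔ u ∈ S ∧ u ≠ v ∧ ∃ w ∉ S, G.Adj w v ∧ G.Adj w u := by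
  simp only [outerSecondNeighbors, mem_filter]

open scoped Classical in
theorem exists_isOneSubdivision_maximal {A : Finset V} {B : Set V} (hAB : Disjoint ↑A B)
    (G : SimpleGraph V) :
    ∃ (H : SimpleGraph A) (m : Sym2 A → V), IsOneSubdivision H G (↑) m ∧
      (∀ e ∈ H.edgeSet, m e ∈ B) ∧ ∀ b ∈ B, (∃ e ∈ H.edgeSet, m e = b) ∨
        ∀ x y : A, x ≠ y → G.Adj x b → G.Adj y b → H.Adj x y := by
  obtain ⟨H, ⟨m, hm, hmB⟩, hmax⟩ := (Set.toFinite {H : SimpleGraph A | ∃ m : Sym2 A → V,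
    IsOneSubdivision H G (↑) m ∧ ∀ e ∈ H.edgeSet, m e ∈ B}).exists_maximal
      ⟨⊥, fun e => (Quot.out e).1,
        ⟨Subtype.val_injective, by simp, by simp, by simp⟩, by simp⟩
  refine ⟨H, m, hm, hmB, fun b hb => or_iff_not_imp_left.mpr fun hunused x y hxy hx hy => ?_⟩
  push Not at hunused
  by_contra hnadj
  have hAb (a : A) : (a : V) ≠ b := fun h => Set.disjoint_left.mp hAB a.2 (h ▸ hb)
  refine hnadj (hmax ⟨_, hm.sup_edge hnadj hAb hunused hx hy, fun e he => ?_⟩ le_sup_left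
    (Or.inr ((edge_adj _ _ _ _).mpr ⟨Or.inl ⟨rfl, rfl⟩, hxy⟩)))
  by_cases hexy : e = s(x, y)
  · rwa [hexy, Function.update_self]
  · rw [Function.update_of_ne hexy]
    exact hmB e ((edgeSet_sup H (edge x y) ▸ he).resolve_right fun h =>
      hexy (edgeSet_edge_subset h))

open scoped Classical in
theorem OneSubdivisionSparse.card_le_of_isClique {α : Type u} (hG : OneSubdivisionSparse G k)
    {H : SimpleGraph α} (hH : ContainsOneSubdivision H G) {s : Finset α} (hs : H.IsClique s) :
    #s ≤ k := by
  by_contra! hk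
  obtain ⟨f, m, hm⟩ := hH
  have : Nonempty s := (card_pos.mp (k.zero_le.trans_lt hk)).to_subtype
  have hlt := hG (H.induce s) ⟨_, _, hm.comp_copy (Copy.induce H s)⟩
  have hs_card : Fintype.card (s : Set α) = #s := Fintype.card_coe s
  rw [induce_eq_top.mpr hs, ← coe_edgeFinset, Set.ncard_coe_finset,
    card_edgeFinset_top_eq_card_choose_two, Nat.choose_two_right,
    Nat.mul_div_cancel' (Nat.even_mul_pred_self _).two_dvd, mul_comm k, hs_card] at hlt
  have := Nat.lt_of_mul_lt_mul_left hlt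
  omega

open scoped Classical in
theorem OneSubdivisionSparse.two_mul_card_highDegree_lt (hG : OneSubdivisionSparse G k)
    {S : Finset V} (hS : S.Nonempty) :
    2 * #{v ∈ S | (k + 1) * (8 * k + 9) ≤ #{u ∈ S | G.Adj v u}} < #S := by
  by_contra! hST
  obtain ⟨A, B, hAB, hA, hcard, hB⟩ := exists_disjoint_forall_le_card_neighbors k.succ_pos
    hS hST fun v hv => (mem_filter.mp hv).2
  obtain ⟨H, m, hm, -, hmax⟩ := exists_isOneSubdivision_maximal (disjoint_coe.mpr hAB) G
  have hused : (B : Set V) ⊆ m '' H.edgeSet := by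
    intro b hb
    refine (hmax b hb).resolve_right fun hclique => (hB b hb).not_gt (Nat.lt_succ_of_le ?_)
    rw [card_filter_subtype]
    exact hG.card_le_of_isClique ⟨_, _, hm⟩ fun x hx y hy hxy =>
      hclique x y hxy (mem_filter.mp hx).2.symm (mem_filter.mp hy).2.symm
  have hBH : #B ≤ H.edgeSet.ncard := Set.ncard_coe_finset B ▸
    (Set.ncard_le_ncard hused (Set.toFinite _)).trans (Set.ncard_image_le (Set.toFinite _))
  have : Nonempty A := hA.to_subtype
  have hlt := hG H ⟨_, _, hm⟩
  rw [Fintype.card_coe] at hlt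
  linarith

open scoped Classical in
/- Every pair counted on the left has a common neighbour `m e` for some edge `e` of a maximal `H`:
either its common neighbour is used by `H`, or maximality makes the pair itself an edge. -/
theorem OneSubdivisionSparse.two_mul_sum_card_outerSecondNeighbors_le
    (hG : OneSubdivisionSparse G k) {S : Finset V} (hS : S.Nonempty) {D : ℕ}
    (hD : ∀ w ∉ S, #{u ∈ S | G.Adj w u} ≤ D) :
    2 * ∑ v ∈ S, #(outerSecondNeighbors G S v) ≤ k * #S * D ^ 2 := by
  obtain ⟨H, m, hm, hmS, hmax⟩ :=
    exists_isOneSubdivision_maximal (disjoint_compl_right (a := (S : Set V))) G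
  let N (e : Sym2 S) : Finset V := {u ∈ S | G.Adj (m e) u}
  have hcover : S.sigma (outerSecondNeighbors G S) ⊆
      H.edgeFinset.biUnion fun e => (N e).sigma fun _ => N e := by
    rintro ⟨v, u⟩ hvu
    obtain ⟨hv, hu⟩ := mem_sigma.mp hvu
    obtain ⟨huS, huv, w, hwS, hwv, hwu⟩ := mem_outerSecondNeighbors.mp hu
    simp only [mem_biUnion, mem_edgeFinset, mem_sigma, N, mem_filter]
    rcases hmax w hwS with ⟨e, he, rfl⟩ | hclique
    · exact ⟨e, he, ⟨hv, hwv⟩, huS, hwu⟩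
    · have he := hclique ⟨v, hv⟩ ⟨u, huS⟩ (by simpa using huv.symm) hwv.symm hwu.symm
      exact ⟨_, he, ⟨hv, (hm.adj _ he _ (Sym2.mem_mk_left _ _)).symm⟩, huS,
        (hm.adj _ he _ (Sym2.mem_mk_right _ _)).symm⟩
  have hsum : ∑ v ∈ S, #(outerSecondNeighbors G S v) ≤ H.edgeSet.ncard * D ^ 2 := by
    rw [← card_sigma, ← coe_edgeFinset, Set.ncard_coe_finset]
    refine (card_le_card hcover).trans (card_biUnion_le_card_mul _ _ _ fun e he => ?_)
    have hN : #(N e) ≤ D := hD _ (hmS e (mem_edgeFinset.mp he))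
    rw [card_sigma, sum_const, smul_eq_mul, sq]
    exact Nat.mul_le_mul hN hN
  have : Nonempty S := hS.to_subtype
  have hlt := hG H ⟨_, _, hm⟩
  rw [Fintype.card_coe] at hlt
  nlinarith [Nat.mul_le_mul_right (D ^ 2) hlt.le]

open scoped Classical in
theorem OneSubdivisionSparse.exists_mem_card_le (hG : OneSubdivisionSparse G k)
    {S : Finset V} (hS : S.Nonempty) {D : ℕ} (hkD : (k + 1) * (8 * k + 9) ≤ D)
    (hD : ∀ w ∉ S, #{u ∈ S | G.Adj w u} ≤ D) :
    ∃ v ∈ S, #{u ∈ S | G.Adj v u} ≤ D ∧ #(outerSecondNeighbors G S v) ≤ k * D ^ 2 := by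
  by_contra! hcon
  let high : Finset V := {v ∈ S | (k + 1) * (8 * k + 9) ≤ #{u ∈ S | G.Adj v u}}
  have hcard : #S < 2 * #(S \ high) := by
    have hhigh : 2 * #high < #S := hG.two_mul_card_highDegree_lt hS
    have hsplit : #(S \ high) + #high = #S := card_sdiff_add_card_eq_card (filter_subset _ S)
    omega
  have hbig : ∀ v ∈ S \ high, k * D ^ 2 + 1 ≤ #(outerSecondNeighbors G S v) := by
    intro v hv
    obtain ⟨hvS, hv⟩ := mem_sdiff.mp hv
    exact hcon v hvS ((not_le.mp fun h => hv (mem_filter.mpr ⟨hvS, h⟩)).le.trans hkD)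
  have hlow : #(S \ high) * (k * D ^ 2 + 1) ≤ ∑ v ∈ S, #(outerSecondNeighbors G S v) :=
    (card_nsmul_le_sum _ _ _ hbig).trans (sum_le_sum_of_subset sdiff_subset)
  have hsum := hG.two_mul_sum_card_outerSecondNeighbors_le hS hD
  nlinarith [Nat.mul_le_mul_left (k * D ^ 2) hcard.le]

open scoped Classical in
theorem OneSubdivisionSparse.exists_cfChoosable (k : ℕ) :
    ∃ c : ℕ, ∀ {V : Type u} [Fintype V] {G : SimpleGraph V}, OneSubdivisionSparse G k →
      CFChoosable G c := by
  obtain ⟨D, hD⟩ : ∃ D, D = (k + 1) * (8 * k + 9) := ⟨_, rfl⟩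
  refine ⟨2 * D + k * D ^ 2 + 1, fun {V _ G} hG => ?_⟩
  obtain ⟨_, hord⟩ := exists_linearOrder_of_elimination
    (I := fun S => ∀ w ∉ S, #{u ∈ S | G.Adj w u} ≤ D)
    (P := fun S v => #{u ∈ S | G.Adj v u} ≤ D ∧ #(outerSecondNeighbors G S v) ≤ k * D ^ 2)
    (by simp) fun S hS hI => by
      obtain ⟨v, hv, hdeg, hsecond⟩ := hG.exists_mem_card_le hS hD.ge hI
      refine ⟨v, hv, ⟨hdeg, hsecond⟩, fun w hw => ?_⟩
      refine (card_le_card (filter_subset_filter _ (erase_subset v S))).trans ?_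
      obtain rfl | hwv := eq_or_ne w v
      exacts [hdeg, hI w fun hwS => hw (mem_erase.mpr ⟨hwv, hwS⟩)]
  refine cfChoosable_of_card_earlier_le (fun v => (card_le_card fun u hu => ?_).trans (hord v).1)
    fun v => (card_le_card fun u hu => ?_).trans (hord v).2
  · obtain ⟨huv, hadj⟩ := (mem_filter.mp hu).2
    simpa using ⟨huv.le, hadj⟩
  · obtain ⟨huv, w, hvw, hwv, hwu⟩ := (mem_filter.mp hu).2
    simpa [mem_outerSecondNeighbors] using ⟨huv.le, huv.ne, w, hvw, hwv, hwu⟩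

end Sparse

theorem stmt17 (k : ℕ) (hk : 0 < k) :
    ∃ c : ℤ, ∀ (V : Type) [Fintype V] (G : SimpleGraph V),
      ¬ CFChoosable G (c : ℝ) →
      ((∃ (α : Type) (_ : Fintype α) (H : SimpleGraph α) (σ : H.edgeSet → α × α),
          ValidOrientation H σ ∧
          (k : ℝ) ≤ 2 * (H.edgeSet.ncard : ℝ) / (Fintype.card α : ℝ) ∧
          ∃ f : subdivGraph H σ (fun _ => 1) →g G, Function.Injective f) ∧
       (∃ (α : Type) (_ : Fintype α) (H : SimpleGraph α) (σ : H.edgeSet → α × α),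
          ValidOrientation H σ ∧ (k : ℕ∞) ≤ H.chromaticNumber ∧
          ∃ f : subdivGraph H σ (fun _ => 3) →g G, Function.Injective f)) := by
  obtain ⟨K, hK⟩ := exists_averageDegree_forall_exists_not_colorable.{0} hk
  obtain ⟨c, hc⟩ := OneSubdivisionSparse.exists_cfChoosable.{0} (max k K)
  refine ⟨c, fun V _ G hG => ?_⟩
  have hdense : ¬ OneSubdivisionSparse G (max k K) := fun h => hG (by exact_mod_cast hc h)
  simp only [OneSubdivisionSparse, not_forall, not_lt] at hdense
  obtain ⟨α, _, _, H, hHG, hdense⟩ := hdense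
  constructor
  · obtain ⟨σ, hσ, hF⟩ := hHG.exists_subdivGraph_one_hom
    refine ⟨α, inferInstance, H, σ, hσ, ?_, hF⟩
    rw [le_div_iff₀ (by exact_mod_cast Fintype.card_pos)]
    exact_mod_cast (Nat.mul_le_mul_right _ (le_max_left k K)).trans hdense
  · obtain ⟨β, _, H', hcol, hH'⟩ := hK ((Nat.mul_le_mul_right _ (le_max_right k K)).trans hdense)
    obtain ⟨σ, hσ, hF⟩ := hH'.exists_subdivGraph_three_hom hHG
    refine ⟨β, inferInstance, H', σ, hσ, le_of_not_ge fun h => hcol ?_, hF⟩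
    exact chromaticNumber_le_iff_colorable.mp h

end CFPaper
end

section
/- Let w be a nonnegative integer. Every finite simple graph with treewidth at most w is conflict-free (2w+1)-choosable. -/
open SimpleGraph

universe u v

namespace CFPaper

variable {V : Type u} {W : Type v}

/-!
Root the tree and list the vertices by the depth of their topmost bags. The earlier vertices sharing
a bag with `v` all lie in the topmost bag of `v`, so there are at most `w` of them, and any two of
them share a bag. Color greedily along this order, giving `v` a color different from those of these
at most `w` vertices and from those of their first neighbors in `G`, as far as already colored: at
most `2 * w` colors are forbidden. The coloring is proper even for the graph of pairs sharing a bag.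
It is conflict-free because the color of the first neighbor `y` of a vertex `v` occurs only once
around `v`: the other neighbors preceding `v` share a bag with `y`, and those following `v` avoid
the color of `y` by construction.
-/

section GreedyListColoring

lemma exists_mem_forall_ne_of_encard_lt {α β : Type*} [LT α] [WellFoundedLT α]
    {L : α → Set β} {F : α → Set α} (hF : ∀ x, ∀ y ∈ F x, y < x)
    (hcard : ∀ x, (F x).encard < (L x).encard) :
    ∃ φ : α → β, (∀ x, φ x ∈ L x) ∧ ∀ x, ∀ y ∈ F x, φ y ≠ φ x := by
  have hstep : ∀ x (ψ : ∀ y, y < x → β), ∃ b ∈ L x, ∀ y (hy : y ∈ F x), ψ y (hF x y hy) ≠ b := by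
    intro x ψ
    have hused : (Set.range fun y : F x => ψ y (hF x y y.2)).encard < (L x).encard := by
      rw [← Set.image_univ]
      exact (Set.encard_image_le _ _).trans_lt ((Set.encard_univ _).trans_lt (hcard x))
    obtain ⟨b, hbL, hb⟩ := Set.not_subset.1 fun h => (Set.encard_le_encard h).not_gt hused
    exact ⟨b, hbL, fun y hy h => hb ⟨⟨y, hy⟩, h⟩⟩
  choose pick hpick_mem hpick_ne using hstep
  let φ : α → β := WellFoundedLT.fix pick
  have hφ : ∀ x, φ x = pick x fun y _ => φ y := WellFoundedLT.fix_eq pick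
  refine ⟨φ, fun x => ?_, fun x y hy => ?_⟩ <;> rw [hφ x]
  · exact hpick_mem _ _
  · exact hpick_ne x (fun y _ => φ y) y hy

end GreedyListColoring

section EliminationOrder

/-- The neighbors of `v` that precede `v` in an elimination order of the vertices. -/
def earlierNbrs [Preorder V] (H : SimpleGraph V) (v : V) : Set V :=
  H.neighborSet v ∩ Set.Iio v

/-- The order on `V` is a perfect elimination order of `H`, read from the last vertex to the
first: the neighbors preceding any given vertex form a clique. -/
def IsPerfectElimination [Preorder V] (H : SimpleGraph V) : Prop :=
  ∀ v, H.IsClique (earlierNbrs H v)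

lemma encard_earlierNbrs_le [Preorder V] {H : SimpleGraph V} {v : V} {s : Set V} {w : ℕ}
    (hv : v ∈ s) (hsub : earlierNbrs H v ⊆ s) (hs : s.encard ≤ w + 1) :
    (earlierNbrs H v).encard ≤ w := by
  have hnot : v ∉ earlierNbrs H v := fun h => lt_irrefl v h.2
  have hinsert : (earlierNbrs H v).encard + 1 ≤ w + 1 := by
    rw [← Set.encard_insert_of_notMem hnot]
    exact (Set.encard_le_encard (Set.insert_subset hv hsub)).trans hs
  exact (ENat.add_le_add_iff_right ENat.one_ne_top).1 hinsert

variable [LinearOrder V] [WellFoundedLT V]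

open Classical in
/-- The least neighbor of `v`, whose color will be the one occurring only once around `v`; an
isolated vertex gets the junk value `v`. -/
noncomputable def firstNbr (G : SimpleGraph V) (v : V) : V :=
  if h : (G.neighborSet v).Nonempty then Function.argminOn id (G.neighborSet v) h else v

lemma isLeast_firstNbr {G : SimpleGraph V} {v : V} (hv : (G.neighborSet v).Nonempty) :
    IsLeast (G.neighborSet v) (firstNbr G v) := by
  rw [firstNbr, dif_pos hv]
  exact ⟨Function.argminOn_mem id _ hv, fun u hu => Function.argminOn_le id _ hu⟩

/-- The vertices preceding `v` whose colors a greedy conflict-free coloring of `G` avoids at `v`,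
where `H` is a supergraph of `G`: the earlier `H`-neighbors of `v`, and the first `G`-neighbors
of these. -/
def conflictSet (G H : SimpleGraph V) (v : V) : Set V :=
  earlierNbrs H v ∪ (firstNbr G '' earlierNbrs H v ∩ Set.Iio v)

lemma lt_of_mem_conflictSet {G H : SimpleGraph V} {u v : V} (hu : u ∈ conflictSet G H v) :
    u < v := by
  rcases hu with ⟨_, hlt⟩ | ⟨_, hlt⟩ <;> exact hlt

lemma encard_conflictSet_le {G H : SimpleGraph V} {v : V} :
    (conflictSet G H v).encard ≤ 2 * (earlierNbrs H v).encard :=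
  calc (conflictSet G H v).encard
      ≤ (earlierNbrs H v).encard + (firstNbr G '' earlierNbrs H v ∩ Set.Iio v).encard :=
        Set.encard_union_le _ _
    _ ≤ (earlierNbrs H v).encard + (earlierNbrs H v).encard := by
        refine add_le_add le_rfl ?_
        exact (Set.encard_le_encard Set.inter_subset_left).trans (Set.encard_image_le _ _)
    _ = 2 * (earlierNbrs H v).encard := (two_mul _).symm

variable {G H : SimpleGraph V} {φ : V → ℕ}

lemma proper_of_forall_mem_conflictSet_ne (hφ : ∀ v, ∀ u ∈ conflictSet G H v, φ u ≠ φ v) :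
    Proper H φ := by
  intro u v huv
  rcases huv.ne.lt_or_gt with hlt | hgt
  · exact hφ v u (Or.inl ⟨huv.symm, hlt⟩)
  · exact (hφ u v (Or.inl ⟨huv, hgt⟩)).symm

lemma conflictFree_of_forall_mem_conflictSet_ne (hGH : G ≤ H) (hH : IsPerfectElimination H)
    (hφ : ∀ v, ∀ u ∈ conflictSet G H v, φ u ≠ φ v) : ConflictFree G φ := by
  intro v hv
  obtain ⟨hfirst, hleast⟩ := isLeast_firstNbr hv
  refine ⟨φ (firstNbr G v), Set.ncard_eq_one.2 ⟨firstNbr G v, ?_⟩⟩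
  refine Set.eq_singleton_iff_unique_mem.2 ⟨⟨hfirst, rfl⟩, fun u ⟨huv, hcolor⟩ => ?_⟩
  by_contra hne
  have hlt : firstNbr G v < u := (hleast huv).lt_of_ne' hne
  rcases huv.ne.lt_or_gt with hvu | huv_lt
  · have hv_earlier : v ∈ earlierNbrs H u := ⟨hGH huv.symm, hvu⟩
    exact hφ u (firstNbr G v) (Or.inr ⟨⟨v, hv_earlier, rfl⟩, hlt⟩) hcolor.symm
  · have hadj : H.Adj (firstNbr G v) u :=
      hH v ⟨hGH hfirst, hlt.trans huv_lt⟩ ⟨hGH huv, huv_lt⟩ hlt.ne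
    exact proper_of_forall_mem_conflictSet_ne hφ hadj hcolor.symm

theorem cfChoosable_of_isPerfectElimination {w : ℕ} (hGH : G ≤ H) (hH : IsPerfectElimination H)
    (hw : ∀ v, (earlierNbrs H v).encard ≤ w) : CFChoosable G ((2 * w + 1 : ℕ) : ℝ) := by
  intro L hL
  have hcard : ∀ v, (conflictSet G H v).encard < (L v : Set ℕ).encard := by
    intro v
    have hLv : 2 * w + 1 ≤ (L v).card := by exact_mod_cast hL v
    calc (conflictSet G H v).encard
        ≤ 2 * (earlierNbrs H v).encard := encard_conflictSet_le
      _ ≤ 2 * (w : ℕ∞) := by gcongr; exact hw v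
      _ < (L v : Set ℕ).encard := by
          rw [Set.encard_coe_eq_coe_finsetCard]
          exact_mod_cast hLv
  obtain ⟨φ, hφL, hφ⟩ :=
    exists_mem_forall_ne_of_encard_lt (fun _ _ => lt_of_mem_conflictSet) hcard
  exact ⟨φ, hφL, fun _ _ huv => proper_of_forall_mem_conflictSet_ne hφ (hGH huv),
    conflictFree_of_forall_mem_conflictSet_ne hGH hH hφ⟩

end EliminationOrder

section Walks

variable {T : SimpleGraph V}

lemma isPath_append_of_forall_eq {x y z : V} {p : T.Walk x y} {q : T.Walk y z} (hp : p.IsPath)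
    (hq : q.IsPath) (hpq : ∀ a ∈ p.support, a ∈ q.support → a = y) : (p.append q).IsPath := by
  have hq_nodup : (y :: q.support.tail).Nodup := q.cons_tail_support.symm ▸ hq.support_nodup
  rw [Walk.isPath_def, Walk.support_append]
  refine hp.support_nodup.append hq_nodup.of_cons fun a hap haq => ?_
  exact hq_nodup.notMem (hpq a hap (List.mem_of_mem_tail haq) ▸ haq)

lemma eq_of_mem_support_of_dist_le {x y r : V} {p : T.Walk x r} (hp : p.length = T.dist x r)
    (hy : y ∈ p.support) (hdist : T.dist x r ≤ T.dist y r) : y = x := by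
  classical
  have hlength : (p.takeUntil y hy).length + (p.dropUntil y hy).length = p.length := by
    rw [← Walk.length_append, p.take_spec hy]
  have hdrop : T.dist y r ≤ (p.dropUntil y hy).length := dist_le _
  exact (Walk.eq_of_length_eq_zero (p := p.takeUntil y hy) (by lia)).symm

lemma eq_of_isPath (hT : T.IsAcyclic) {x y : V} {p q : T.Walk x y} (hp : p.IsPath)
    (hq : q.IsPath) : p = q :=
  congrArg Subtype.val ((hT.subsingleton_path x y).elim ⟨p, hp⟩ ⟨q, hq⟩)

lemma length_eq_dist_of_isPath (hT : T.IsAcyclic) {x y : V} {p : T.Walk x y} (hp : p.IsPath) :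
    p.length = T.dist x y := by
  obtain ⟨q, hq, hq_length⟩ := p.reachable.exists_path_of_dist
  rw [← hq_length, eq_of_isPath hT hp hq]

lemma mem_of_mem_support_of_preconnected_induce (hT : T.IsAcyclic) {S : Set V}
    (hS : (T.induce S).Preconnected) {x y : V} (hx : x ∈ S) (hy : y ∈ S) {p : T.Walk x y}
    (hp : p.IsPath) {z : V} (hz : z ∈ p.support) : z ∈ S := by
  obtain ⟨q, hq⟩ := (hS ⟨x, hx⟩ ⟨y, hy⟩).exists_isPath
  have hpq : p = q.map (Embedding.induce S).toHom :=
    eq_of_isPath hT hp (hq.map Subtype.val_injective)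
  have hz' : z ∈ (q.map (Embedding.induce S).toHom).support := hpq ▸ hz
  rw [Walk.support_map] at hz'
  obtain ⟨s, -, rfl⟩ := List.mem_map.1 hz'
  exact s.2

lemma mem_support_of_isMinOn_dist (hT : T.IsAcyclic) {S : Set V}
    (hS : (T.induce S).Preconnected) {x t r : V} (hx : x ∈ S) (ht : t ∈ S)
    (hmin : IsMinOn (T.dist · r) S t) {p : T.Walk x r} (hp : p.IsPath) : t ∈ p.support := by
  have hxt : T.Reachable x t := (hS ⟨x, hx⟩ ⟨t, ht⟩).map (Embedding.induce S).toHom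
  obtain ⟨q, hq⟩ := hxt.exists_isPath
  obtain ⟨s, hs, hs_length⟩ := (q.reverse.append p).reachable.exists_path_of_dist
  have hqs : (q.append s).IsPath := isPath_append_of_forall_eq hq hs fun a haq has =>
    eq_of_mem_support_of_dist_le hs_length has
      (hmin (mem_of_mem_support_of_preconnected_induce hT hS hx ht hq haq))
  rw [eq_of_isPath hT hp hqs, Walk.mem_support_append_iff]
  exact Or.inl q.end_mem_support

/-- On the path from a common vertex `x` to the root `r`, the top `t'` of `S'` comes no later than
the top `t` of `S`, hence lies on the part of the path that runs inside `S`. -/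
lemma mem_of_isMinOn_dist_of_dist_le (hT : T.IsTree) {S S' : Set V}
    (hS : (T.induce S).Preconnected) (hS' : (T.induce S').Preconnected) {x t t' r : V}
    (hx : x ∈ S ∩ S') (ht : t ∈ S) (ht' : t' ∈ S') (hmin : IsMinOn (T.dist · r) S t)
    (hmin' : IsMinOn (T.dist · r) S' t') (hle : T.dist t r ≤ T.dist t' r) : t' ∈ S := by
  have hac := hT.isAcyclic
  obtain ⟨p, hp⟩ := hT.connected.exists_isPath x r
  have ht_mem : t ∈ p.support := mem_support_of_isMinOn_dist hac hS hx.1 ht hmin hp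
  have ht'_mem : t' ∈ p.support := mem_support_of_isMinOn_dist hac hS' hx.2 ht' hmin' hp
  obtain ⟨q, s, hq, hs, rfl⟩ := hp.mem_support_iff_exists_append.1 ht_mem
  rcases (Walk.mem_support_append_iff q s).1 ht'_mem with hmem_q | hmem_s
  · exact mem_of_mem_support_of_preconnected_induce hac hS hx.1 ht hq hmem_q
  · rwa [eq_of_mem_support_of_dist_le (length_eq_dist_of_isPath hac hs) hmem_s hle]

end Walks

section TreeDecomposition

lemma exists_linearOrder_wellFoundedLT_monotone {α β : Type*} [LinearOrder β] [WellFoundedLT β]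
    (d : α → β) : ∃ _ : LinearOrder α, WellFoundedLT α ∧ Monotone d := by
  obtain ⟨_, _⟩ := exists_wellFoundedLT α
  let key : α → β ×ₗ α := fun a => toLex (d a, a)
  have hkey : Function.Injective key := fun a b h => congrArg (fun c => (ofLex c).2) h
  exact ⟨LinearOrder.lift' key hkey, ⟨InvImage.wf key wellFounded_lt⟩,
    fun a b hab => Prod.Lex.monotone_fst _ _ (show key a ≤ key b from hab)⟩

variable {ι : Type*} {G : SimpleGraph V} {T : SimpleGraph ι} {B : ι → Set V}

/-- The graph in which two distinct vertices are adjacent if they share a bag of `B`. For a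
tree-decomposition of `G` this is a chordal supergraph of `G`. -/
def bagGraph (B : ι → Set V) : SimpleGraph V :=
  SimpleGraph.fromRel fun u v => ∃ x, u ∈ B x ∧ v ∈ B x

lemma bagGraph_adj {u v : V} : (bagGraph B).Adj u v ↔ u ≠ v ∧ ∃ x, u ∈ B x ∧ v ∈ B x := by
  simp only [bagGraph, fromRel_adj, and_comm, or_self]

lemma le_bagGraph (hB : IsTreeDecomp G T B) : G ≤ bagGraph B :=
  fun _ _ huv => bagGraph_adj.2 ⟨huv.ne, hB.edge_in_bag huv⟩

lemma exists_linearOrder_earlierNbrs_subset_bag (hB : IsTreeDecomp G T B) :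
    ∃ _ : LinearOrder V, WellFoundedLT V ∧
      ∀ v, ∃ x, v ∈ B x ∧ earlierNbrs (bagGraph B) v ⊆ B x := by
  obtain ⟨r⟩ := hB.tree.connected.nonempty
  have hconn : ∀ v, (T.induce {x | v ∈ B x}).Preconnected :=
    fun v => (hB.bags_connected v).preconnected
  have htop : ∀ v, ∃ t, v ∈ B t ∧ IsMinOn (T.dist · r) {x | v ∈ B x} t := by
    intro v
    have hne : {x | v ∈ B x}.Nonempty := Set.nonempty_coe_sort.1 (hB.bags_connected v).nonempty
    exact ⟨_, Function.argminOn_mem (T.dist · r) _ hne,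
      fun _ => Function.argminOn_le (T.dist · r) _⟩
  choose top htop_mem htop_min using htop
  obtain ⟨_, hwf, hmono⟩ := exists_linearOrder_wellFoundedLT_monotone fun v => T.dist (top v) r
  refine ⟨_, hwf, fun v => ⟨top v, htop_mem v, fun u ⟨hadj, hlt⟩ => ?_⟩⟩
  obtain ⟨-, x, hvx, hux⟩ := bagGraph_adj.1 hadj
  exact mem_of_isMinOn_dist_of_dist_le hB.tree (hconn u) (hconn v) ⟨hux, hvx⟩ (htop_mem u)
    (htop_mem v) (htop_min u) (htop_min v) (hmono hlt.le)

lemma isPerfectElimination_bagGraph [Preorder V]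
    (hbag : ∀ v, ∃ x, earlierNbrs (bagGraph B) v ⊆ B x) : IsPerfectElimination (bagGraph B) := by
  intro v a ha b hb hab
  obtain ⟨x, hx⟩ := hbag v
  exact bagGraph_adj.2 ⟨hab, x, hx ha, hx hb⟩

end TreeDecomposition

theorem stmt19_general {ι : Type*} {G : SimpleGraph V} {T : SimpleGraph ι} {B : ι → Set V}
    (w : ℕ) (hB : IsTreeDecomp G T B) (hw : ∀ x, (B x).encard ≤ w + 1) :
    CFChoosable G ((2 * w + 1 : ℕ) : ℝ) := by
  obtain ⟨_, _, hbag⟩ := exists_linearOrder_earlierNbrs_subset_bag hB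
  refine cfChoosable_of_isPerfectElimination (le_bagGraph hB)
    (isPerfectElimination_bagGraph fun v => (hbag v).imp fun _ => And.right) fun v => ?_
  obtain ⟨x, hv, hsub⟩ := hbag v
  exact encard_earlierNbrs_le hv hsub (hw x)

theorem stmt19 (w : ℕ) (V : Type) [Fintype V] (G : SimpleGraph V)
    (htw : ∃ (ι : Type) (_ : Fintype ι) (T : SimpleGraph ι) (B : ι → Set V),
      IsTreeDecomp G T B ∧ ∀ x : ι, (B x).ncard ≤ w + 1) :
    CFChoosable G ((2 * w + 1 : ℕ) : ℝ) := by
  obtain ⟨ι, _, T, B, hB, hw⟩ := htw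
  exact stmt19_general w hB fun x => (B x).toFinite.cast_ncard_eq ▸ mod_cast hw x

end CFPaper
end
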